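/- Let G be a compact Hausdorff topological group acting continuously on a topological space X with X^G ≠ ∅. If TC^G(X) = 1, then X is G-contractible. -/

import Mathlib

open Set unitInterval

namespace PaperTC

variable {G X : Type*}

/-- The orbit of `x` under the action `act`. -/
def orbit (act : G → X → X) (x : X) : Set X := {y | ∃ g, act g x = y}

/-- The fixed point set of the action `act`. -/
def fixedSet (act : G → X → X) : Set X := {x | ∀ g, act g x = x}

/-- The fixed point set of a subset `S` of the acting group. -/
def fixedSetOf (act : G → X → X) (S : Set G) : Set X := {x | ∀ g ∈ S, act g x = x}

/-- `minCover P` is the least `k ≥ 1` satisfying `P k`, as an element of `ℕ∞`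
(equal to `∞` if there is no such `k`). -/
noncomputable def minCover (P : ℕ → Prop) : ℕ∞ :=
  sInf {k : ℕ∞ | ∃ m : ℕ, k = m ∧ 1 ≤ m ∧ P m}

section Plain

variable (Y : Type*) [TopologicalSpace Y]

/-- `Y × Y` can be covered by `k` open sets each admitting a motion planner. -/
def TCcover (k : ℕ) : Prop :=
  ∃ U : Fin k → Set (Y × Y),
    (∀ i, IsOpen (U i)) ∧ (⋃ i, U i) = univ ∧
    ∀ i, ∃ s : Y × Y → C(I, Y),
      ContinuousOn s (U i) ∧ ∀ p ∈ U i, s p 0 = p.1 ∧ s p 1 = p.2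

/-- Topological complexity (non-reduced, possibly infinite). -/
noncomputable def TC : ℕ∞ := minCover (TCcover Y)

/-- `Y` can be covered by `k` open sets, each of which can be deformed within `Y`
to a point. -/
def catCover (k : ℕ) : Prop :=
  ∃ U : Fin k → Set Y,
    (∀ i, IsOpen (U i)) ∧ (⋃ i, U i) = univ ∧
    ∀ i, ∃ H : Y × I → Y,
      ContinuousOn H (U i ×ˢ (univ : Set I)) ∧ (∀ x ∈ U i, H (x, 0) = x) ∧
      ∃ y₀, ∀ x ∈ U i, H (x, 1) = y₀

/-- Non-reduced Lusternik–Schnirelmann category. -/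
noncomputable def cat : ℕ∞ := minCover (catCover Y)

end Plain

section Equivariant

variable [TopologicalSpace X] (act : G → X → X)

/-- `X × X` can be covered by `k` invariant open sets each admitting an
equivariant motion planner. -/
def eqTCcover (k : ℕ) : Prop :=
  ∃ U : Fin k → Set (X × X),
    (∀ i, IsOpen (U i)) ∧ (⋃ i, U i) = univ ∧
    ∀ i, (∀ g p, p ∈ U i → (act g p.1, act g p.2) ∈ U i) ∧
      ∃ s : X × X → C(I, X),
        ContinuousOn s (U i) ∧
        (∀ p ∈ U i, s p 0 = p.1 ∧ s p 1 = p.2) ∧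
        (∀ g p, p ∈ U i → ∀ t : I, s (act g p.1, act g p.2) t = act g (s p t))

/-- Equivariant topological complexity `TC_G` of Colman and Grant. -/
noncomputable def eqTC : ℕ∞ := minCover (eqTCcover act)

/-- `X × X` can be covered by `k` `(G × G)`-invariant open sets, each admitting a
`(G × G)`-equivariant section of `π^G : P X ×_{X/G} P X → X × X`; such a section is
recorded by a pair of paths `s₁ p`, `s₂ p`, with the orbit of the endpoint of the first
equal to the orbit of the starting point of the second. -/
def invTCcover (k : ℕ) : Prop :=
  ∃ U : Fin k → Set (X × X),
    (∀ i, IsOpen (U i)) ∧ (⋃ i, U i) = univ ∧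
    ∀ i, (∀ g₁ g₂ : G, ∀ p, p ∈ U i → (act g₁ p.1, act g₂ p.2) ∈ U i) ∧
      ∃ s₁ s₂ : X × X → C(I, X),
        ContinuousOn s₁ (U i) ∧ ContinuousOn s₂ (U i) ∧
        (∀ p ∈ U i, s₁ p 0 = p.1 ∧ s₂ p 1 = p.2 ∧
          orbit act (s₁ p 1) = orbit act (s₂ p 0)) ∧
        (∀ g₁ g₂ : G, ∀ p, p ∈ U i → ∀ t : I,
          s₁ (act g₁ p.1, act g₂ p.2) t = act g₁ (s₁ p t) ∧
          s₂ (act g₁ p.1, act g₂ p.2) t = act g₂ (s₂ p t))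

/-- Invariant topological complexity `TC^G` of Lubawski and Marzantowicz. -/
noncomputable def invTC : ℕ∞ := minCover (invTCcover act)

/-- The invariant open set `U` is `G`-compressible into `A`: the inclusion `U ↪ X` is
`G`-equivariantly homotopic to a `G`-map with values in `A`. -/
def GCompressible (A : Set X) (U : Set X) : Prop :=
  (∀ g x, x ∈ U → act g x ∈ U) ∧
  ∃ H : X × I → X,
    ContinuousOn H (U ×ˢ (univ : Set I)) ∧ (∀ x ∈ U, H (x, 0) = x) ∧
    (∀ g x, x ∈ U → ∀ t : I, H (act g x, t) = act g (H (x, t))) ∧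
    (∀ x ∈ U, H (x, 1) ∈ A)

/-- A `G`-categorical set: compressible into a single orbit. -/
def GCategorical (U : Set X) : Prop :=
  ∃ x₀ : X, GCompressible act (orbit act x₀) U

/-- `X` can be covered by `k` open `G`-categorical sets. -/
def catGCover (k : ℕ) : Prop :=
  ∃ U : Fin k → Set X,
    (∀ i, IsOpen (U i)) ∧ (⋃ i, U i) = univ ∧ ∀ i, GCategorical act (U i)

/-- Equivariant Lusternik–Schnirelmann category `cat_G`. -/
noncomputable def catG : ℕ∞ := minCover (catGCover act)

/-- `X` can be covered by `k` open sets `G`-compressible into `{star}`. -/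
def pointedCatGCover (star : X) (k : ℕ) : Prop :=
  ∃ U : Fin k → Set X,
    (∀ i, IsOpen (U i)) ∧ (⋃ i, U i) = univ ∧
    ∀ i, GCompressible act {star} (U i)

/-- The pointed equivariant category `_{{⋆}}cat_G(X)`. -/
noncomputable def pointedCatG (star : X) : ℕ∞ := minCover (pointedCatGCover act star)

/-- `X` is `G`-contractible: the identity is `G`-homotopic to a map with values in a
single orbit. -/
def GContractible : Prop :=
  ∃ H : X × I → X,
    Continuous H ∧ (∀ x, H (x, 0) = x) ∧
    (∀ g x, ∀ t : I, H (act g x, t) = act g (H (x, t))) ∧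
    ∃ x₀ : X, ∀ x, H (x, 1) ∈ orbit act x₀

end Equivariant

/-- The orbit space `X/G` with the quotient topology. -/
abbrev OrbitSpace (act : G → X → X) : Type _ := Quot (fun x y => ∃ g, act g x = y)

end PaperTC

open PaperTC

/-!
Fix `z ∈ X^G` and restrict a `(G × G)`-equivariant section of `π^G` to the slice `X × {z}`. The
first path, starting at `x`, is `G`-equivariant in `x`. The second path ends at `z`, and `(1, g)`
fixes `(x, z)`, so it runs inside `X^G`. Its initial point is therefore alone in its orbit, the two
paths actually meet, and their concatenation is an equivariant deformation of the slice to `z`.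
-/

namespace PaperTC

theorem minCover_eq_one_iff {P : ℕ → Prop} : minCover P = 1 ↔ P 1 := by
  constructor
  · intro h
    have hne : {k : ℕ∞ | ∃ m : ℕ, k = m ∧ 1 ≤ m ∧ P m}.Nonempty := by
      rw [nonempty_iff_ne_empty]
      intro hempty
      simp [minCover, hempty] at h
    obtain ⟨m, hm, -, hPm⟩ := csInf_mem hne
    have hm_one : m = 1 := by exact_mod_cast hm.symm.trans h
    exact hm_one ▸ hPm
  · intro h
    refine le_antisymm (sInf_le ⟨1, Nat.cast_one.symm, le_rfl, h⟩) (le_sInf ?_)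
    rintro _ ⟨m, rfl, hm, -⟩
    exact_mod_cast hm

section PathConcat

variable {Y Z : Type*} [TopologicalSpace Y] [TopologicalSpace Z]

/-- The concatenation of two paths, each traversed at double speed. It is defined without requiring
`γ 1 = δ 0`, so that it can be applied to families of paths that match only over a subset; when they
do not match, it jumps after time `1 / 2`. -/
noncomputable def pathConcat (γ δ : C(I, Y)) (t : I) : Y :=
  if 2 * (t : ℝ) ≤ 1 then γ (projIcc 0 1 zero_le_one (2 * (t : ℝ)))
  else δ (projIcc 0 1 zero_le_one (2 * (t : ℝ) - 1))

theorem pathConcat_zero (γ δ : C(I, Y)) : pathConcat γ δ 0 = γ 0 := by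
  simp [pathConcat]

theorem pathConcat_one (γ δ : C(I, Y)) : pathConcat γ δ 1 = δ 1 := by
  have two_sub_one : (2 : ℝ) - 1 = 1 := by norm_num
  simp [pathConcat, two_sub_one]

theorem pathConcat_eq_apply_pathConcat {γ δ : C(I, Y)} {γ' δ' : C(I, Z)} {f : Y → Z}
    (hγ : ∀ t, γ' t = f (γ t)) (hδ : ∀ t, δ' t = f (δ t)) (t : I) :
    pathConcat γ' δ' t = f (pathConcat γ δ t) := by
  simp only [pathConcat, hγ, hδ, apply_ite f]

theorem continuousOn_pathConcat {γ δ : Z → C(I, Y)} {V : Set Z} (hγ : ContinuousOn γ V)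
    (hδ : ContinuousOn δ V) (hmeet : ∀ x ∈ V, γ x 1 = δ x 0) :
    ContinuousOn (fun q : Z × I => pathConcat (γ q.1) (δ q.1) q.2) (V ×ˢ univ) := by
  have maps_fst : MapsTo Prod.fst (V ×ˢ (univ : Set I)) V := fun _ hq => hq.1
  have hfirst : ContinuousOn
      (fun q : Z × I => γ q.1 (projIcc 0 1 zero_le_one (2 * (q.2 : ℝ)))) (V ×ˢ univ) :=
    (hγ.comp continuousOn_fst maps_fst).eval
      (continuous_projIcc.comp (by fun_prop)).continuousOn
  have hsecond : ContinuousOn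
      (fun q : Z × I => δ q.1 (projIcc 0 1 zero_le_one (2 * (q.2 : ℝ) - 1))) (V ×ˢ univ) :=
    (hδ.comp continuousOn_fst maps_fst).eval
      (continuous_projIcc.comp (by fun_prop)).continuousOn
  refine ContinuousOn.if ?_ (hfirst.mono inter_subset_left) (hsecond.mono inter_subset_left)
  rintro ⟨x, t⟩ ⟨⟨hx, -⟩, ht⟩
  have ht_half : 2 * (t : ℝ) = 1 :=
    frontier_le_subset_eq (f := fun q : Z × I => 2 * (q.2 : ℝ)) (by fun_prop) continuous_const ht
  simp only [ht_half, sub_self, projIcc_left, projIcc_right]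
  exact hmeet x hx

end PathConcat

section Action

variable {G X : Type*} {act : G → X → X} {z : X} {U : Set (X × X)}

theorem mem_orbit_self [One G] (act_one : ∀ x, act 1 x = x) (x : X) : x ∈ orbit act x :=
  ⟨1, act_one x⟩

theorem eq_of_orbit_eq_of_mem_fixedSet [One G] (act_one : ∀ x, act 1 x = x) {x y : X}
    (hy : y ∈ fixedSet act) (h : orbit act x = orbit act y) : x = y := by
  obtain ⟨g, hg⟩ := h ▸ mem_orbit_self act_one x
  exact hg.symm.trans (hy g)

variable [TopologicalSpace X]

variable (act U) in
/-- The pair `(s₁, s₂)` is a `(G × G)`-equivariant section of `π^G` over the `(G × G)`-invariant set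
`U`. The covers in `invTCcover` are the open covers whose members carry such a pair. As there, the
paths are total functions of `X × X`, of which only the values on `U` matter. -/
structure IsInvariantMotionPlanner (s₁ s₂ : X × X → C(I, X)) : Prop where
  act_mem : ∀ g₁ g₂ : G, ∀ p ∈ U, (act g₁ p.1, act g₂ p.2) ∈ U
  continuousOn_fst : ContinuousOn s₁ U
  continuousOn_snd : ContinuousOn s₂ U
  fst_zero : ∀ p ∈ U, s₁ p 0 = p.1
  snd_one : ∀ p ∈ U, s₂ p 1 = p.2
  orbit_eq : ∀ p ∈ U, orbit act (s₁ p 1) = orbit act (s₂ p 0)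
  fst_act : ∀ g₁ g₂ : G, ∀ p ∈ U, ∀ t, s₁ (act g₁ p.1, act g₂ p.2) t = act g₁ (s₁ p t)
  snd_act : ∀ g₁ g₂ : G, ∀ p ∈ U, ∀ t, s₂ (act g₁ p.1, act g₂ p.2) t = act g₂ (s₂ p t)

namespace IsInvariantMotionPlanner

variable {s₁ s₂ : X × X → C(I, X)}

theorem snd_mem_fixedSet [One G] (hs : IsInvariantMotionPlanner act U s₁ s₂)
    (act_one : ∀ x, act 1 x = x) (hz : z ∈ fixedSet act) {x : X} (hx : (x, z) ∈ U) (t : I) :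
    s₂ (x, z) t ∈ fixedSet act := by
  intro g
  simpa only [act_one, hz g] using (hs.snd_act 1 g (x, z) hx t).symm

theorem fst_one_eq_snd_zero [One G] (hs : IsInvariantMotionPlanner act U s₁ s₂)
    (act_one : ∀ x, act 1 x = x) (hz : z ∈ fixedSet act) {x : X} (hx : (x, z) ∈ U) :
    s₁ (x, z) 1 = s₂ (x, z) 0 :=
  eq_of_orbit_eq_of_mem_fixedSet act_one (hs.snd_mem_fixedSet act_one hz hx 0)
    (hs.orbit_eq (x, z) hx)

theorem gCompressible_slice [One G] (hs : IsInvariantMotionPlanner act U s₁ s₂)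
    (act_one : ∀ x, act 1 x = x) (hz : z ∈ fixedSet act) :
    GCompressible act {z} {x | (x, z) ∈ U} := by
  have maps_slice : MapsTo (fun x => (x, z)) {x | (x, z) ∈ U} U := fun _ hx => hx
  have continuous_slice : Continuous fun x : X => (x, z) := by fun_prop
  refine ⟨fun g x hx => ?_, fun q => pathConcat (s₁ (q.1, z)) (s₂ (q.1, z)) q.2, ?_,
    fun x hx => ?_, fun g x hx => ?_, fun x hx => ?_⟩
  · change (act g x, z) ∈ U
    simpa only [hz g] using hs.act_mem g g (x, z) hx
  · exact continuousOn_pathConcat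
      (hs.continuousOn_fst.comp continuous_slice.continuousOn maps_slice)
      (hs.continuousOn_snd.comp continuous_slice.continuousOn maps_slice)
      fun _ hx => hs.fst_one_eq_snd_zero act_one hz hx
  · exact (pathConcat_zero _ _).trans (hs.fst_zero (x, z) hx)
  · have hfst : ∀ t, s₁ (act g x, z) t = act g (s₁ (x, z) t) := by
      simpa only [hz g] using hs.fst_act g g (x, z) hx
    have hsnd : ∀ t, s₂ (act g x, z) t = act g (s₂ (x, z) t) := by
      simpa only [hz g] using hs.snd_act g g (x, z) hx
    exact pathConcat_eq_apply_pathConcat hfst hsnd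
  · exact (pathConcat_one _ _).trans (hs.snd_one (x, z) hx)

end IsInvariantMotionPlanner

theorem pointedCatGCover_of_invTCcover [One G] (act_one : ∀ x, act 1 x = x)
    (hz : z ∈ fixedSet act) {k : ℕ} (h : invTCcover act k) : pointedCatGCover act z k := by
  obtain ⟨U, hopen, hcover, hplan⟩ := h
  refine ⟨fun i => {x | (x, z) ∈ U i}, fun i => (hopen i).preimage (by fun_prop), ?_, fun i => ?_⟩
  · exact preimage_iUnion.symm.trans (congrArg (preimage fun x => (x, z)) hcover)
  · obtain ⟨hact, s₁, s₂, hs₁, hs₂, hends, hequiv⟩ := hplan i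
    have hs : IsInvariantMotionPlanner act (U i) s₁ s₂ :=
      { act_mem := hact
        continuousOn_fst := hs₁
        continuousOn_snd := hs₂
        fst_zero := fun p hp => (hends p hp).1
        snd_one := fun p hp => (hends p hp).2.1
        orbit_eq := fun p hp => (hends p hp).2.2
        fst_act := fun g₁ g₂ p hp t => (hequiv g₁ g₂ p hp t).1
        snd_act := fun g₁ g₂ p hp t => (hequiv g₁ g₂ p hp t).2 }
    exact hs.gCompressible_slice act_one hz

theorem gCompressible_univ_of_pointedCatGCover_one (h : pointedCatGCover act z 1) :
    GCompressible act {z} univ := by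
  obtain ⟨U, -, hcover, hU⟩ := h
  rw [iUnion, iSup_unique] at hcover
  exact hcover ▸ hU default

theorem GCompressible.mono {A B V : Set X} (h : GCompressible act A V) (hAB : A ⊆ B) :
    GCompressible act B V := by
  obtain ⟨hV, H, hH, hzero, hequiv, hone⟩ := h
  exact ⟨hV, H, hH, hzero, hequiv, fun x hx => hAB (hone x hx)⟩

theorem GCategorical.gContractible (h : GCategorical act univ) : GContractible act := by
  obtain ⟨x₀, -, H, hH, hzero, hequiv, hone⟩ := h
  rw [univ_prod_univ, continuousOn_univ] at hH
  exact ⟨H, hH, fun x => hzero x (mem_univ x), fun g x => hequiv g x (mem_univ x), x₀,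
    fun x => hone x (mem_univ x)⟩

end Action

end PaperTC

theorem gContractible_of_invTC_eq_one_general {G X : Type*} [Monoid G] [MulAction G X]
    [TopologicalSpace X] (hfix : (fixedSet fun (g : G) (x : X) => g • x).Nonempty)
    (h : invTC (fun (g : G) (x : X) => g • x) = 1) :
    GContractible fun (g : G) (x : X) => g • x := by
  obtain ⟨z, hz⟩ := hfix
  have hcompress : GCompressible (fun (g : G) (x : X) => g • x) {z} univ :=
    gCompressible_univ_of_pointedCatGCover_one <|
      pointedCatGCover_of_invTCcover (one_smul G) hz (minCover_eq_one_iff.mp h)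
  exact GCategorical.gContractible
    ⟨z, hcompress.mono (singleton_subset_iff.mpr (mem_orbit_self (one_smul G) z))⟩

/-- For a compact Hausdorff topological group `G` acting continuously on a
space `X` with `X^G ≠ ∅`, if `TC^G(X) = 1` then `X` is `G`-contractible. -/
theorem gContractible_of_invTC_eq_one {G X : Type*} [Group G] [TopologicalSpace G]
    [IsTopologicalGroup G] [CompactSpace G] [T2Space G] [TopologicalSpace X]
    (act : G → X → X)
    (act_one : ∀ x, act 1 x = x)
    (act_mul : ∀ g h x, act (g * h) x = act g (act h x))
    (act_cont : Continuous fun p : G × X => act p.1 p.2)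
    (hfix : (fixedSet act).Nonempty)
    (h : invTC act = 1) :
    GContractible act := by
  let : MulAction G X := { smul := act, one_smul := act_one, mul_smul := act_mul }
  exact gContractible_of_invTC_eq_one_general hfix h
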